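/- Let n ≥ 1, h > 0, α = √((n+1)/n), β = 1/(n+1), γ = (1/n)(1 ± √β), V = α(I − γ·e·eᵀ), and V₊ = [V, −V·e] with columns v₁, …, v_{n+1}. Let x₀ ∈ ℝⁿ and x_j = x₀ + h·v_j for j = 1, …, n+1. Suppose f : ℝⁿ → ℝ is continuously differentiable on an open set Ω containing the closed ball of radius h centered at x₀, and ∇f is Lipschitz continuous on Ω with constant L > 0. Let g = (1/(hα²))·V₊·δf₊ where δf₊ = (f(x₁) − f(x₀), …, f(x_{n+1}) − f(x₀))ᵀ. Then for every vertex x_j, j = 1, …, n+1, one has ‖∇f(x_j) − g‖₂ ≤ (1 + (1/2)√n)·L·h. -/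

import Mathlib

open Matrix

/-!
The columns of `V₊` are unit vectors and `V₊ V₊ᵀ = α² I`, so they form a tight frame of `ℝⁿ`. The
frame identity makes the simplex gradient exact on affine functions, hence `g - ∇f(x₀)` is the
synthesis `(hα²)⁻¹ ∑ rₖ vₖ` of the Taylor remainders `rₖ`, each at most `L h² / 2`. Tightness bounds
`‖∑ rₖ vₖ‖²` by `α² ∑ rₖ²`, and `∑ ‖vₖ‖² = α² n` (the trace of `V₊ V₊ᵀ`) turns this into
`‖g - ∇f(x₀)‖ ≤ √n L h / 2`. The Lipschitz bound between `x₀` and a vertex adds `L h`.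
-/

open Module WithLp
open scoped Gradient RealInnerProductSpace

theorem add_smul_mem_closedBall {E : Type*} [SeminormedAddCommGroup E] [NormedSpace ℝ E]
    {h : ℝ} (hh : 0 ≤ h) (x₀ : E) {u : E} (hu : ‖u‖ ≤ 1) :
    x₀ + h • u ∈ Metric.closedBall x₀ h := by
  rw [add_mem_closedBall_iff_norm, norm_smul, Real.norm_of_nonneg hh]
  exact mul_le_of_le_one_right hh hu

section Taylor

variable {E F : Type*} [NormedAddCommGroup E] [NormedAddCommGroup F]

theorem norm_image_sub_sub_le_of_norm_fderiv_sub_le [NormedSpace ℝ E] [NormedSpace ℝ F]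
    {f : E → F} {f' : E → E →L[ℝ] F} {x y : E} {L : ℝ}
    (hf : ∀ z ∈ segment ℝ x y, HasFDerivWithinAt f (f' z) (segment ℝ x y) z)
    (hLip : ∀ z ∈ segment ℝ x y, ‖f' z - f' x‖ ≤ L * ‖z - x‖) :
    ‖f y - f x - f' x (y - x)‖ ≤ L / 2 * ‖y - x‖ ^ 2 := by
  let p : ℝ → E := AffineMap.lineMap x y
  have hp : Set.MapsTo p (Set.Icc 0 1) (segment ℝ x y) :=
    fun t ht => segment_eq_image_lineMap ℝ x y ▸ Set.mem_image_of_mem p ht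
  have hderiv : ∀ t ∈ Set.Icc (0 : ℝ) 1,
      HasDerivWithinAt (fun t => f (p t) - f x - t • f' x (y - x))
        ((f' (p t) - f' x) (y - x)) (Set.Icc 0 1) t := fun t ht => by
    have hfp := (hf _ (hp ht)).comp_hasDerivWithinAt t
      AffineMap.hasDerivAt_lineMap.hasDerivWithinAt hp
    have hlin := (hasDerivWithinAt_id t (Set.Icc 0 1)).smul_const (f' x (y - x))
    exact ((hfp.sub_const (f x)).sub hlin).congr_deriv (by simp)
  have hbound : ∀ t ∈ Set.Ico (0 : ℝ) 1, ‖(f' (p t) - f' x) (y - x)‖ ≤ L * ‖y - x‖ ^ 2 * t :=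
    fun t ht => by
      have hpt : ‖p t - x‖ = t * ‖y - x‖ := by
        rw [← dist_eq_norm, dist_lineMap_left, Real.norm_of_nonneg ht.1, dist_eq_norm']
      calc ‖(f' (p t) - f' x) (y - x)‖ ≤ ‖f' (p t) - f' x‖ * ‖y - x‖ :=
            ContinuousLinearMap.le_opNorm _ _
        _ ≤ L * (t * ‖y - x‖) * ‖y - x‖ := by
            gcongr
            exact hpt ▸ hLip _ (hp (Set.Ico_subset_Icc_self ht))
        _ = L * ‖y - x‖ ^ 2 * t := by ring
  have hbarrier (t : ℝ) :
      HasDerivAt (fun t => L / 2 * ‖y - x‖ ^ 2 * t ^ 2) (L * ‖y - x‖ ^ 2 * t) t :=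
    ((hasDerivAt_pow 2 t).const_mul _).congr_deriv (by norm_num; ring)
  simpa [p] using image_norm_le_of_norm_deriv_right_le_deriv_boundary
    (fun t ht => (hderiv t ht).continuousWithinAt)
    (fun t ht => (hderiv t (Set.Ico_subset_Icc_self ht)).mono_of_mem_nhdsWithin
      (Icc_mem_nhdsGE_of_mem ht))
    (by simp [p]) hbarrier hbound (Set.right_mem_Icc.2 zero_le_one)

theorem abs_sub_sub_inner_le_of_norm_gradient_sub_le [InnerProductSpace ℝ E] [CompleteSpace E]
    {f : E → ℝ} {f' : E → E} {x y : E} {L : ℝ}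
    (hf : ∀ z ∈ segment ℝ x y, HasGradientWithinAt f (f' z) (segment ℝ x y) z)
    (hLip : ∀ z ∈ segment ℝ x y, ‖f' z - f' x‖ ≤ L * ‖z - x‖) :
    |f y - f x - ⟪f' x, y - x⟫| ≤ L / 2 * ‖y - x‖ ^ 2 := by
  have hLip' : ∀ z ∈ segment ℝ x y, ‖InnerProductSpace.toDual ℝ E (f' z) -
      InnerProductSpace.toDual ℝ E (f' x)‖ ≤ L * ‖z - x‖ := fun z hz => by
    rw [← map_sub, LinearIsometryEquiv.norm_map]
    exact hLip z hz
  simpa using norm_image_sub_sub_le_of_norm_fderiv_sub_le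
    (fun z hz => (hf z hz).hasFDerivWithinAt) hLip'

end Taylor

section TightFrame

variable {E ι : Type*} [NormedAddCommGroup E] [InnerProductSpace ℝ E] [Fintype ι]

/-- The finite family `v` is a tight frame with frame constant `A`: its frame operator
`u ↦ ∑ j, ⟪v j, u⟫ • v j` is `A` times the identity. This is the polarized form of the usual
definition `∑ j, ⟪v j, u⟫ ^ 2 = A * ‖u‖ ^ 2`. -/
structure IsTightFrame (A : ℝ) (v : ι → E) : Prop where
  pos : 0 < A
  sum_inner_smul : ∀ u, ∑ j, ⟪v j, u⟫ • v j = A • u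

namespace IsTightFrame

variable {A : ℝ} {v : ι → E}

theorem sum_inner_sq (hv : IsTightFrame A v) (u : E) : ∑ j, ⟪v j, u⟫ ^ 2 = A * ‖u‖ ^ 2 := by
  have h := congrArg (⟪·, u⟫) (hv.sum_inner_smul u)
  simpa [sum_inner, real_inner_smul_left, sq] using h

theorem finiteDimensional (hv : IsTightFrame A v) : FiniteDimensional ℝ E :=
  .of_surjective (Fintype.linearCombination ℝ v) fun u =>
    ⟨fun j => A⁻¹ * ⟪v j, u⟫, by
      simp only [Fintype.linearCombination_apply, mul_smul, ← Finset.smul_sum, hv.sum_inner_smul,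
        inv_smul_smul₀ hv.pos.ne']⟩

theorem sum_norm_sq (hv : IsTightFrame A v) : ∑ j, ‖v j‖ ^ 2 = A * finrank ℝ E := by
  have := hv.finiteDimensional
  let b := stdOrthonormalBasis ℝ E
  calc ∑ j, ‖v j‖ ^ 2 = ∑ j, ∑ i, ⟪v j, b i⟫ ^ 2 := by
        simp only [← b.sum_sq_norm_inner_left, Real.norm_eq_abs, sq_abs]
    _ = ∑ i, A * ‖b i‖ ^ 2 := by
        rw [Finset.sum_comm]
        simp only [hv.sum_inner_sq]
    _ = A * finrank ℝ E := by simp [mul_comm]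

theorem norm_sum_smul_sq_le (hv : IsTightFrame A v) (r : ι → ℝ) :
    ‖∑ j, r j • v j‖ ^ 2 ≤ A * ∑ j, r j ^ 2 := by
  set s := ∑ j, r j • v j with hs
  have hrs : ∑ j, r j * ⟪v j, s⟫ = ‖s‖ ^ 2 := by
    rw [← real_inner_self_eq_norm_sq]
    nth_rewrite 2 [hs]
    simp [sum_inner, real_inner_smul_left]
  have hcs := Finset.sum_mul_sq_le_sq_mul_sq Finset.univ r fun j => ⟪v j, s⟫
  rw [hrs, hv.sum_inner_sq] at hcs
  rcases (sq_nonneg ‖s‖).eq_or_lt with h0 | hpos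
  · rw [← h0]
    exact mul_nonneg hv.pos.le (Finset.sum_nonneg fun j _ => sq_nonneg (r j))
  · exact le_of_mul_le_mul_right (by linarith) hpos

end IsTightFrame

/-- The difference-quotient gradient of `f` at `x₀` on the points `x₀ + h • v j`. When `v` is a
tight frame with constant `A`, it is the least-squares solution `g` of the linear system
`⟪v j, g⟫ = (f (x₀ + h • v j) - f x₀) / h`. -/
noncomputable def frameGradient (v : ι → E) (A h : ℝ) (f : E → ℝ) (x₀ : E) : E :=
  (h * A)⁻¹ • ∑ j, (f (x₀ + h • v j) - f x₀) • v j

variable {A h L : ℝ} {v : ι → E} {f : E → ℝ} {x₀ : E}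

theorem IsTightFrame.frameGradient_sub (hv : IsTightFrame A v) (hh : h ≠ 0) (u : E) :
    frameGradient v A h f x₀ - u =
      (h * A)⁻¹ • ∑ j, (f (x₀ + h • v j) - f x₀ - ⟪u, h • v j⟫) • v j := by
  have hu : u = (h * A)⁻¹ • ∑ j, ⟪u, h • v j⟫ • v j := by
    simp only [real_inner_comm _ u, real_inner_smul_left, mul_smul, ← Finset.smul_sum,
      hv.sum_inner_smul]
    rw [smul_smul h, inv_smul_smul₀ (mul_ne_zero hh hv.pos.ne')]
  nth_rewrite 1 [hu]
  rw [frameGradient, ← smul_sub, ← Finset.sum_sub_distrib]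
  simp only [sub_smul]

variable {f' : E → E} [CompleteSpace E]

theorem IsTightFrame.norm_frameGradient_sub_le (hv : IsTightFrame A v) (hv1 : ∀ j, ‖v j‖ ≤ 1)
    (hh : 0 < h) (hL : 0 ≤ L)
    (hf : ∀ y ∈ Metric.closedBall x₀ h, HasGradientWithinAt f (f' y) (Metric.closedBall x₀ h) y)
    (hLip : ∀ y ∈ Metric.closedBall x₀ h, ‖f' y - f' x₀‖ ≤ L * ‖y - x₀‖) :
    ‖frameGradient v A h f x₀ - f' x₀‖ ≤ 1 / 2 * √(finrank ℝ E) * L * h := by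
  let r j := f (x₀ + h • v j) - f x₀ - ⟪f' x₀, h • v j⟫
  have hr (j : ι) : r j ^ 2 ≤ (L / 2 * h ^ 2) ^ 2 * ‖v j‖ ^ 2 := by
    have hseg : segment ℝ x₀ (x₀ + h • v j) ⊆ Metric.closedBall x₀ h :=
      (convex_closedBall x₀ h).segment_subset (Metric.mem_closedBall_self hh.le)
        (add_smul_mem_closedBall hh.le x₀ (hv1 j))
    have htaylor := abs_sub_sub_inner_le_of_norm_gradient_sub_le
      (fun z hz => (hf z (hseg hz)).hasFDerivWithinAt.mono hseg) (fun z hz => hLip z (hseg hz))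
    rw [add_sub_cancel_left, norm_smul, Real.norm_of_nonneg hh.le] at htaylor
    have hvj : ‖v j‖ ^ 2 ≤ ‖v j‖ := pow_le_of_le_one (norm_nonneg _) (hv1 j) two_ne_zero
    rw [← mul_pow, ← sq_abs]
    gcongr
    calc |r j| ≤ L / 2 * h ^ 2 * ‖v j‖ ^ 2 := htaylor.trans_eq (by ring)
      _ ≤ L / 2 * h ^ 2 * ‖v j‖ := by gcongr
  have hsum : ‖∑ j, r j • v j‖ ≤ A * √(finrank ℝ E) * (L / 2 * h ^ 2) := by
    have hA := hv.pos
    refine (sq_le_sq₀ (norm_nonneg _) (by positivity)).1 ?_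
    calc ‖∑ j, r j • v j‖ ^ 2 ≤ A * ∑ j, r j ^ 2 := hv.norm_sum_smul_sq_le r
      _ ≤ A * ∑ j, (L / 2 * h ^ 2) ^ 2 * ‖v j‖ ^ 2 := by gcongr with j; exact hr j
      _ = A ^ 2 * finrank ℝ E * (L / 2 * h ^ 2) ^ 2 := by
          rw [← Finset.mul_sum, hv.sum_norm_sq]; ring
      _ = (A * √(finrank ℝ E) * (L / 2 * h ^ 2)) ^ 2 := by
          rw [mul_pow _ (L / 2 * h ^ 2), mul_pow A, Real.sq_sqrt (Nat.cast_nonneg _)]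
  have hhA : 0 < h * A := mul_pos hh hv.pos
  rw [hv.frameGradient_sub hh.ne', norm_smul, norm_inv, Real.norm_of_nonneg hhA.le,
    inv_mul_le_iff₀ hhA]
  exact hsum.trans_eq (by ring)

theorem stmt_13_general (hv : IsTightFrame A v) (hv1 : ∀ j, ‖v j‖ ≤ 1)
    (hh : 0 < h) (hL : 0 ≤ L)
    (hf : ∀ y ∈ Metric.closedBall x₀ h, HasGradientWithinAt f (f' y) (Metric.closedBall x₀ h) y)
    (hLip : ∀ y ∈ Metric.closedBall x₀ h, ‖f' y - f' x₀‖ ≤ L * ‖y - x₀‖)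
    {y : E} (hy : y ∈ Metric.closedBall x₀ h) :
    ‖f' y - frameGradient v A h f x₀‖ ≤ (1 + 1 / 2 * √(finrank ℝ E)) * L * h := by
  have hy₀ : ‖f' y - f' x₀‖ ≤ L * h :=
    (hLip y hy).trans (by gcongr; exact mem_closedBall_iff_norm.1 hy)
  calc ‖f' y - frameGradient v A h f x₀‖
      ≤ ‖f' y - f' x₀‖ + ‖f' x₀ - frameGradient v A h f x₀‖ := norm_sub_le_norm_sub_add_norm_sub ..
    _ ≤ L * h + 1 / 2 * √(finrank ℝ E) * L * h := by
        rw [norm_sub_rev (f' x₀)]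
        exact add_le_add hy₀ (hv.norm_frameGradient_sub_le hv1 hh hL hf hLip)
    _ = (1 + 1 / 2 * √(finrank ℝ E)) * L * h := by ring

end TightFrame

section Columns

variable {m ι : Type*} [Fintype ι]

theorem sum_smul_toLp_col (M : Matrix m ι ℝ) (r : ι → ℝ) :
    ∑ j, r j • toLp 2 (M.col j) = toLp 2 (M *ᵥ r) := by
  ext i
  simp [mulVec, dotProduct, mul_comm]

theorem isTightFrame_toLp_col [Fintype m] [DecidableEq m] {M : Matrix m ι ℝ} {A : ℝ} (hA : 0 < A)
    (hM : M * Mᵀ = A • 1) : IsTightFrame A fun j => toLp 2 (M.col j) where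
  pos := hA
  sum_inner_smul u := by
    have hinner (j : ι) : ⟪toLp 2 (M.col j), u⟫ = (Mᵀ *ᵥ u) j := by
      simp [PiLp.inner_apply, mulVec, dotProduct, mul_comm]
    simp only [hinner, sum_smul_toLp_col, mulVec_mulVec, hM, smul_mulVec, one_mulVec]
    rfl

end Columns

section PositiveBasis

variable {m R : Type*} [CommRing R] {n : ℕ}

/-- The matrix `V₊ = [V, -V e]`, whose columns form the minimal positive basis generated by the
columns of `V`. -/
def minimalPositiveBasis (V : Matrix m (Fin n) R) : Matrix m (Fin (n + 1)) R :=
  of fun i => Fin.snoc (V i) (-(V *ᵥ 1) i)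

variable (V : Matrix m (Fin n) R)

theorem col_minimalPositiveBasis_castSucc (j : Fin n) :
    (minimalPositiveBasis V).col j.castSucc = V.col j := by
  ext i
  simp [minimalPositiveBasis]

theorem col_minimalPositiveBasis_last :
    (minimalPositiveBasis V).col (Fin.last n) = -(V *ᵥ 1) := by
  ext i
  simp [minimalPositiveBasis]

theorem minimalPositiveBasis_mul_transpose :
    minimalPositiveBasis V * (minimalPositiveBasis V)ᵀ = V * Vᵀ + vecMulVec (V *ᵥ 1) (V *ᵥ 1) := by
  ext i k
  simp [minimalPositiveBasis, mul_apply, Fin.sum_univ_castSucc, vecMulVec_apply]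

end PositiveBasis

section AlignedBasis

variable {ι R : Type*} [DecidableEq ι] [CommRing R]

variable (ι) in
/-- The matrix `V = α (I - γ e eᵀ)`, whose columns are the directions from the centroid of an
aligned simplex to all but one of its vertices. -/
def alignedBasis (α γ : R) : Matrix ι ι R :=
  α • (1 - γ • vecMulVec 1 1)

variable (α γ : R)

theorem transpose_alignedBasis : (alignedBasis ι α γ)ᵀ = alignedBasis ι α γ := by
  rw [alignedBasis, transpose_smul, transpose_sub, transpose_one, transpose_smul,
    transpose_vecMulVec]

variable [Fintype ι]

theorem alignedBasis_mulVec_one :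
    alignedBasis ι α γ *ᵥ 1 = (α * (1 - Fintype.card ι * γ)) • 1 := by
  rw [alignedBasis, smul_mulVec, sub_mulVec, smul_mulVec, vecMulVec_mulVec, one_mulVec]
  ext i
  simp [mul_comm]

theorem alignedBasis_mul_self :
    alignedBasis ι α γ * alignedBasis ι α γ =
      α ^ 2 • (1 + (Fintype.card ι * γ ^ 2 - 2 * γ) • vecMulVec 1 1) := by
  have hJ : vecMulVec (1 : ι → R) (1 : ι → R) * vecMulVec 1 1 =
      (Fintype.card ι : R) • vecMulVec 1 1 := by
    rw [vecMulVec_mul_vecMulVec, one_dotProduct_one]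
    ext i j
    simp [vecMulVec_apply]
  simp only [alignedBasis, sub_mul, mul_sub, one_mul, mul_one, hJ,
    smul_mul_assoc, mul_smul_comm, smul_smul]
  module

end AlignedBasis

section AlignedSimplex

/-- The matrix `V₊` whose columns are the directions from the centroid of an aligned simplex to its
vertices. The simplex is regular when `(n + 1) * (1 - n * γ) ^ 2 = 1`, and its vertices are then at
distance one from the centroid when `n * α ^ 2 = n + 1`. -/
def alignedSimplex {R : Type*} [CommRing R] (n : ℕ) (α γ : R) : Matrix (Fin n) (Fin (n + 1)) R :=
  minimalPositiveBasis (alignedBasis (Fin n) α γ)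

theorem alignedSimplex_mul_transpose {K : Type*} [Field K] {n : ℕ} {α γ : K} (hn : (n : K) ≠ 0)
    (hγ : (n + 1) * (1 - n * γ) ^ 2 = 1) :
    alignedSimplex n α γ * (alignedSimplex n α γ)ᵀ = α ^ 2 • 1 := by
  have hcancel : n * γ ^ 2 - 2 * γ + (1 - n * γ) ^ 2 = 0 :=
    mul_left_cancel₀ hn (by linear_combination hγ)
  let J : Matrix (Fin n) (Fin n) K := vecMulVec 1 1
  calc alignedSimplex n α γ * (alignedSimplex n α γ)ᵀ
      = α ^ 2 • (1 + (n * γ ^ 2 - 2 * γ) • J) + (α * (1 - n * γ)) • (α * (1 - n * γ)) • J := by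
        rw [alignedSimplex, minimalPositiveBasis_mul_transpose, transpose_alignedBasis,
          alignedBasis_mul_self, alignedBasis_mulVec_one, smul_vecMulVec,
          vecMulVec_smul, Fintype.card_fin]
    _ = α ^ 2 • (1 + (n * γ ^ 2 - 2 * γ + (1 - n * γ) ^ 2) • J) := by module
    _ = α ^ 2 • 1 := by rw [hcancel, zero_smul, add_zero]

variable {n : ℕ} {α γ : ℝ}

theorem mul_one_sub_mul_sq_of_aligned (hn : n ≠ 0)
    (hγ : γ = 1 / n * (1 - √(1 / (n + 1))) ∨ γ = 1 / n * (1 + √(1 / (n + 1)))) :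
    (n + 1) * (1 - n * γ) ^ 2 = 1 := by
  have hroot : 1 - n * γ = √(1 / (n + 1)) ∨ 1 - n * γ = -√(1 / (n + 1)) := by
    refine hγ.imp ?_ ?_ <;> rintro rfl <;> field_simp <;> ring
  rw [sq_eq_sq_iff_eq_or_eq_neg.2 hroot, Real.sq_sqrt (by positivity)]
  field_simp

theorem isTightFrame_alignedSimplex (hn : n ≠ 0) (hα : α ≠ 0)
    (hγ : (n + 1) * (1 - n * γ) ^ 2 = 1) :
    IsTightFrame (α ^ 2) fun j => toLp 2 ((alignedSimplex n α γ).col j) :=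
  isTightFrame_toLp_col (by positivity) (alignedSimplex_mul_transpose (Nat.cast_ne_zero.2 hn) hγ)

theorem norm_col_alignedSimplex (hα : n * α ^ 2 = n + 1)
    (hγ : (n + 1) * (1 - n * γ) ^ 2 = 1) (j : Fin (n + 1)) :
    ‖toLp 2 ((alignedSimplex n α γ).col j)‖ = 1 := by
  have hlast : n * (α * (1 - n * γ)) ^ 2 = 1 := by linear_combination (1 - n * γ) ^ 2 * hα + hγ
  rw [← pow_eq_one_iff_of_nonneg (norm_nonneg _) two_ne_zero]
  cases j using Fin.lastCases with
  | last =>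
    rw [alignedSimplex, col_minimalPositiveBasis_last, alignedBasis_mulVec_one]
    simpa [EuclideanSpace.real_norm_sq_eq] using hlast
  | cast j =>
    have hn : (n : ℝ) ≠ 0 := fun h => by simp [h] at hlast
    have hdiag : α ^ 2 * (1 + (n * γ ^ 2 - 2 * γ)) = 1 :=
      mul_left_cancel₀ (pow_ne_zero 2 hn) (by linear_combination (n - 1) * hα + hlast)
    calc ‖toLp 2 ((alignedSimplex n α γ).col j.castSucc)‖ ^ 2
        = ((alignedBasis (Fin n) α γ)ᵀ * alignedBasis (Fin n) α γ) j j := by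
          rw [alignedSimplex, col_minimalPositiveBasis_castSucc, EuclideanSpace.real_norm_sq_eq]
          simp [mul_apply, sq]
      _ = α ^ 2 * (1 + (n * γ ^ 2 - 2 * γ)) := by
          simp [transpose_alignedBasis, alignedBasis_mul_self]
      _ = 1 := hdiag

end AlignedSimplex

/-- Error bound at the vertices: for the aligned regular simplex
of radius `h` and centroid `x₀`, if `f` is `C¹` on an open set `Ω ⊇ B̄(x₀, h)`
with `L`-Lipschitz gradient on `Ω`, then the aligned regular simplex gradient
`g = (1/(hα²)) V₊ δf₊` satisfies `‖∇f(x_j) − g‖₂ ≤ (1 + √n/2) L h` at every vertex `x_j`. -/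
theorem stmt_13 (n : ℕ) (hn : 1 ≤ n)
    (α β γ h L : ℝ) (hh : 0 < h) (hL : 0 < L)
    (hα : α = Real.sqrt ((n + 1) / n))
    (hβ : β = 1 / (n + 1))
    (hγ : γ = (1 / n) * (1 - Real.sqrt β) ∨ γ = (1 / n) * (1 + Real.sqrt β))
    (e : Fin n → ℝ) (he : e = fun _ => 1)
    (V : Matrix (Fin n) (Fin n) ℝ)
    (hV : V = α • ((1 : Matrix (Fin n) (Fin n) ℝ) - γ • Matrix.vecMulVec e e))
    (Vp : Matrix (Fin n) (Fin (n + 1)) ℝ)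
    (hVp : ∀ (i : Fin n) (j : Fin (n + 1)),
      Vp i j = if hj : (j : ℕ) < n then V i ⟨j, hj⟩ else -(V.mulVec e i))
    (x₀ : EuclideanSpace ℝ (Fin n))
    (x : Fin (n + 1) → EuclideanSpace ℝ (Fin n))
    (hx : ∀ (j : Fin (n + 1)) (i : Fin n), x j i = x₀ i + h * Vp i j)
    (f : EuclideanSpace ℝ (Fin n) → ℝ)
    (Ω : Set (EuclideanSpace ℝ (Fin n)))
    (hΩopen : IsOpen Ω)
    (hball : Metric.closedBall x₀ h ⊆ Ω)
    (hf : ContDiffOn ℝ 1 f Ω)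
    (hLip : ∀ y ∈ Ω, ∀ z ∈ Ω, ‖gradient f y - gradient f z‖ ≤ L * ‖y - z‖)
    (δ : Fin (n + 1) → ℝ)
    (hδ : ∀ j, δ j = f (x j) - f x₀)
    (g : EuclideanSpace ℝ (Fin n))
    (hg : ∀ i, g i = (1 / (h * α ^ 2)) * Vp.mulVec δ i) :
    ∀ j : Fin (n + 1), ‖gradient f (x j) - g‖ ≤ (1 + (1 / 2) * Real.sqrt n) * L * h := by
  intro j
  have hn0 : n ≠ 0 := Nat.one_le_iff_ne_zero.1 hn
  have hα0 : α ≠ 0 := hα ▸ by positivity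
  have hα' : n * α ^ 2 = n + 1 := by
    rw [hα, Real.sq_sqrt (by positivity)]
    field_simp
  have hγ' := mul_one_sub_mul_sq_of_aligned hn0 (hβ ▸ hγ)
  obtain rfl : Vp = alignedSimplex n α γ := by
    subst he hV
    exact ext hVp
  let v j := toLp 2 ((alignedSimplex n α γ).col j)
  have hv1 (j) : ‖v j‖ ≤ 1 := (norm_col_alignedSimplex hα' hγ' j).le
  have hxv (j) : x j = x₀ + h • v j := by ext i; simp [v, hx]
  have hgv : g = frameGradient v (α ^ 2) h f x₀ := by
    simp only [frameGradient, ← hxv, ← hδ]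
    ext i
    simp [v, sum_smul_toLp_col, hg]
  have hf' : ∀ y ∈ Metric.closedBall x₀ h,
      HasGradientWithinAt f (∇ f y) (Metric.closedBall x₀ h) y := fun y hy =>
    ((hf.differentiableOn one_ne_zero).differentiableAt
      (hΩopen.mem_nhds (hball hy))).hasGradientAt.hasFDerivAt.hasFDerivWithinAt
  have hx₀ : x₀ ∈ Ω := hball (Metric.mem_closedBall_self hh.le)
  have herror := stmt_13_general (isTightFrame_alignedSimplex hn0 hα0 hγ') hv1 hh hL.le hf'
    (fun y hy => hLip y (hball hy) x₀ hx₀) (add_smul_mem_closedBall hh.le x₀ (hv1 j))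
  rwa [← hxv, ← hgv, finrank_euclideanSpace_fin] at herror
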